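/- arXiv:1811.03117 — 2 statements merged into one kernel-verified Lean document; each statement's English description precedes it below -/
import Mathlib

section
/- Let m and n be integers with |m| ≥ 3 and |n| ≥ 3, and let G = BS(m,n). For every g ∈ G with g ∉ ⟨a⟩, there exist two elements of the subgroup of G generated by a and g which freely generate a free subgroup of rank 2. -/
/-- The defining relator set of the Baumslag–Solitar group `BS(m, n)`:
`a` is indexed by `false`, `t` by `true`. -/
def bsRels (m n : ℤ) : Set (FreeGroup Bool) :=
  {FreeGroup.of true * FreeGroup.of false ^ m * (FreeGroup.of true)⁻¹ * (FreeGroup.of false ^ n)⁻¹}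

/-- The Baumslag–Solitar group `BS(m, n) = ⟨a, t ∣ t a^m t⁻¹ = a^n⟩`. -/
abbrev BS (m n : ℤ) := PresentedGroup (bsRels m n)

/-- The generator `a` of `BS(m, n)`. -/
def BS.a (m n : ℤ) : BS m n := PresentedGroup.of false

/-- The generator `t` of `BS(m, n)`. -/
def BS.t (m n : ℤ) : BS m n := PresentedGroup.of true
/-- `x` and `y` freely generate a free subgroup of rank 2: the homomorphism from the
free group on two generators sending the generators to `x` and `y` is injective. -/
def FreelyGenerateF2 {G : Type*} [Group G] (x y : G) : Prop :=
  Function.Injective (FreeGroup.lift (fun b : Bool => if b then x else y) : FreeGroup Bool →* G)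

open HNNExtension HNNExtension.NormalWord in
/-- Every normal word is trivial or factors as `head * g₀ * l`, where `g₀` maps the complement of a
half-tree into a half-tree. -/
theorem normalWord_decomp {G : Type*} [Group G] {A B : Subgroup G} (φ : A ≃* B)
    {d : TransversalPair G A B} (w : NormalWord d) :
    (w.toList = [] ∧ w.prod φ = of w.head) ∨
    ∃ (e f : ℤˣ) (l : G) (g₀ : HNNExtension G A B φ),
      w.prod φ = of w.head * g₀ * of l ∧
      w.toList.head?.map Prod.fst = some e ∧
      ∀ v : NormalWord d, ¬ Cancels f v → Cancels (-e) (g₀ • v) := by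
  induction w using consRecOn with
  | ofGroup g => left; simp [ReducedWord.prod]
  | cons g u w h1 h2 ih =>
    right
    rcases ih with ⟨h, hp⟩ | ⟨e, f, l, g₀, hp, he, hv⟩
    · refine ⟨u, u, w.head, t ^ (u : ℤ), ?_, by simp, ?_⟩
      · rw [prod_cons, hp]; simp [mul_assoc]
      · intro v hv
        rw [t_pow_smul_eq_unitsSMul, unitsSMul_cancels_iff]
        exact hv
    · refine ⟨u, f, l, t ^ (u : ℤ) * (of w.head * g₀), ?_, by simp, ?_⟩
      · rw [prod_cons, hp]; simp [mul_assoc]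
      · intro v hfv
        rw [mul_smul, t_pow_smul_eq_unitsSMul, unitsSMul_cancels_iff, mul_smul, of_smul_eq_smul]
        obtain ⟨c1, c2⟩ := hv v hfv
        rintro ⟨c3, c4⟩
        rw [group_smul_toList, c2] at c4
        have hu : u = -e := by
          have := Option.some.inj c4
          rw [neg_neg] at this
          rw [this, neg_neg]
        subst hu
        rw [group_smul_head, Subgroup.mul_mem_cancel_right _ c1] at c3
        refine not_cancels_of_cons_hyp _ w h2 ⟨c3, ?_⟩
        rw [he, neg_neg]

/-- Ping-pong for `a h a` and `h a h a⁻¹ h`. -/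
theorem pingpong_aux {Γ α : Type} [Group Γ] [MulAction Γ α] (hα : Nonempty α) (U : Set α)
    (a h : Γ) (ha : ∀ i : ℤ, i ≠ 0 → |i| ≤ 2 → ∀ v ∈ U, a ^ i • v ∉ U)
    (hh : ∀ i : ℤ, i ≠ 0 → |i| ≤ 2 → ∀ v ∉ U, h ^ i • v ∈ U) :
    Function.Injective (FreeGroup.lift
      (fun b : Bool => if b then a * h * a else h * a * h * a⁻¹ * h)) := by
  have a1 : ∀ v ∈ U, a • v ∉ U := by simpa using ha 1
  have a1' : ∀ v ∈ U, a⁻¹ • v ∉ U := by simpa using ha (-1)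
  have a2 : ∀ v ∈ U, a • a • v ∉ U := by
    intro v hv; have := ha 2 (by norm_num) (by norm_num) v hv; rwa [zpow_two, mul_smul] at this
  have h1 : ∀ v ∉ U, h • v ∈ U := by simpa using hh 1
  have h1' : ∀ v ∉ U, h⁻¹ • v ∈ U := by simpa using hh (-1)
  have h2 : ∀ v ∉ U, h • h • v ∈ U := by
    intro v hv; have := hh 2 (by norm_num) (by norm_num) v hv; rwa [zpow_two, mul_smul] at this
  have hU : U.Nonempty := by
    obtain ⟨v⟩ := hα
    by_cases hv : v ∈ U
    · exact ⟨v, hv⟩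
    · exact ⟨_, h1 v hv⟩
  obtain ⟨p, hp⟩ := hU
  -- the four half-trees
  have d1 : ∀ v, a⁻¹ • v ∈ U → a⁻¹ • h⁻¹ • v ∈ U → False := fun v q r => by
    have s := a1 _ q
    have s2 := a1 _ r
    rw [smul_inv_smul] at s s2
    exact s2 (h1' _ s)
  have d2 : ∀ v, a⁻¹ • v ∈ U → a • v ∈ U → False := fun v q r => by
    have s := a2 _ q
    rw [smul_inv_smul] at s
    exact s r
  have d3 : ∀ v, a⁻¹ • v ∈ U → a⁻¹ • h • v ∈ U → False := fun v q r => by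
    have s := a1 _ q
    have s2 := a1 _ r
    rw [smul_inv_smul] at s s2
    exact s2 (h1 _ s)
  have d4 : ∀ v, a • v ∈ U → a⁻¹ • h⁻¹ • v ∈ U → False := fun v q r => by
    have s := a1' _ q
    have s2 := a1 _ r
    rw [smul_inv_smul] at s2
    rw [inv_smul_smul] at s
    exact s2 (h1' _ s)
  have d5 : ∀ v, a • v ∈ U → a⁻¹ • h • v ∈ U → False := fun v q r => by
    have s := a1' _ q
    have s2 := a1 _ r
    rw [smul_inv_smul] at s2
    rw [inv_smul_smul] at s
    exact s2 (h1 _ s)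
  have d6 : ∀ v, a⁻¹ • h⁻¹ • v ∈ U → a⁻¹ • h • v ∈ U → False := fun v q r => by
    have s := a1 _ q
    have s2 := a1 _ r
    rw [smul_inv_smul] at s s2
    have := h2 _ s
    rw [smul_inv_smul] at this
    exact s2 this
  refine FreeGroup.injective_lift_of_ping_pong (G := Γ) (α := α) _
    (fun b : Bool => if b then {v | a⁻¹ • v ∈ U} else {v | a⁻¹ • h⁻¹ • v ∈ U})
    (fun b : Bool => if b then {v | a • v ∈ U} else {v | a⁻¹ • h • v ∈ U}) ?_ ?_ ?_ ?_ ?_ ?_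
  · rintro (_ | _)
    · exact ⟨h • a • p, by simpa using hp⟩
    · exact ⟨a • p, by simpa using hp⟩
  · rintro (_ | _) (_ | _) hne
    · exact absurd rfl hne
    · exact Set.disjoint_left.2 fun v q r => d1 v r q
    · exact Set.disjoint_left.2 fun v q r => d1 v q r
    · exact absurd rfl hne
  · rintro (_ | _) (_ | _) hne
    · exact absurd rfl hne
    · exact Set.disjoint_left.2 fun v q r => d5 v r q
    · exact Set.disjoint_left.2 fun v q r => d5 v q r
    · exact absurd rfl hne
  · rintro (_ | _) (_ | _)
    · exact Set.disjoint_left.2 fun v q r => d6 v q r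
    · exact Set.disjoint_left.2 fun v q r => d4 v r q
    · exact Set.disjoint_left.2 fun v q r => d3 v q r
    · exact Set.disjoint_left.2 fun v q r => d2 v q r
  · rintro (_ | _) _ ⟨v, hv, rfl⟩
    · simpa [mul_smul] using h1 _ hv
    · simpa [mul_smul] using h1 _ hv
  · rintro (_ | _) _ ⟨v, hv, rfl⟩
    · simpa [mul_smul] using h1' _ hv
    · simpa [mul_smul] using h1' _ hv

/-- Multiples subgroup of `ℤ`, written multiplicatively. -/
def mulRange (m : ℤ) : Subgroup (Multiplicative ℤ) :=
  (zpowGroupHom m : Multiplicative ℤ →* Multiplicative ℤ).range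

theorem mem_mulRange {m : ℤ} {x : Multiplicative ℤ} :
    x ∈ mulRange m ↔ m ∣ x.toAdd := by
  constructor
  · rintro ⟨z, rfl⟩
    exact ⟨z.toAdd, by simp⟩
  · rintro ⟨z, hz⟩
    exact ⟨Multiplicative.ofAdd z, by
      apply Multiplicative.toAdd.injective
      simp [hz]⟩

theorem zpowHom_inj {m : ℤ} (hm : m ≠ 0) :
    Function.Injective (zpowGroupHom m : Multiplicative ℤ →* Multiplicative ℤ) := by
  intro x y hxy
  have := congrArg Multiplicative.toAdd hxy
  apply Multiplicative.toAdd.injective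
  simpa [hm] using this

/-- The isomorphism `mℤ ≃ nℤ`. -/
noncomputable def mulRangeEquiv {m n : ℤ} (hm : m ≠ 0) (hn : n ≠ 0) :
    mulRange m ≃* mulRange n :=
  (MonoidHom.ofInjective (zpowHom_inj hm)).symm.trans (MonoidHom.ofInjective (zpowHom_inj hn))

theorem mulRangeEquiv_apply {m n : ℤ} (hm : m ≠ 0) (hn : n ≠ 0) (z : Multiplicative ℤ)
    (h : z ^ m ∈ mulRange m) :
    (mulRangeEquiv hm hn ⟨z ^ m, h⟩ : Multiplicative ℤ) = z ^ n := by
  have : (⟨z ^ m, h⟩ : mulRange m) = MonoidHom.ofInjective (zpowHom_inj hm) z := by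
    ext1; rfl
  rw [this, mulRangeEquiv]
  erw [MulEquiv.trans_apply, MulEquiv.symm_apply_apply]
  rfl

/-- `BS(m,n)` maps to the HNN extension. -/
theorem bs_hnn (m n : ℤ) (hm : m ≠ 0) (hn : n ≠ 0) :
    ∃ (F : BS m n →* HNNExtension (Multiplicative ℤ) (mulRange m) (mulRange n)
        (mulRangeEquiv hm hn))
      (F' : HNNExtension (Multiplicative ℤ) (mulRange m) (mulRange n)
        (mulRangeEquiv hm hn) →* BS m n),
      (∀ x, F' (F x) = x) ∧
      (∀ k : ℤ, F (BS.a m n ^ k) = HNNExtension.of (Multiplicative.ofAdd k)) ∧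
      (∀ k : ℤ, F' (HNNExtension.of (Multiplicative.ofAdd k)) = BS.a m n ^ k) := by
  have ofpow : ∀ k : ℤ, (HNNExtension.of (φ := mulRangeEquiv hm hn) (Multiplicative.ofAdd 1)) ^ k
      = HNNExtension.of (Multiplicative.ofAdd k) := by
    intro k
    rw [← map_zpow, ← ofAdd_zsmul]; simp
  have hrel : BS.t m n * BS.a m n ^ m = BS.a m n ^ n * BS.t m n := by
    have : PresentedGroup.mk (bsRels m n) _ = 1 := PresentedGroup.one_of_mem (rels := bsRels m n)
      (Set.mem_singleton _)
    simp only [map_mul, map_inv, map_zpow] at this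
    rw [mul_inv_eq_one, mul_inv_eq_iff_eq_mul] at this
    exact this
  let F : BS m n →* HNNExtension (Multiplicative ℤ) (mulRange m) (mulRange n)
        (mulRangeEquiv hm hn) :=
    PresentedGroup.toGroup (rels := bsRels m n)
      (f := fun b : Bool => if b then HNNExtension.t else HNNExtension.of (Multiplicative.ofAdd 1))
      (by
        rintro r rfl
        simp only [map_mul, map_inv, map_zpow, FreeGroup.lift_apply_of, if_true]
        rw [mul_inv_eq_one, mul_inv_eq_iff_eq_mul]
        have := HNNExtension.t_mul_of (φ := mulRangeEquiv hm hn)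
          ⟨(Multiplicative.ofAdd (1:ℤ)) ^ m, ⟨_, rfl⟩⟩
        have h2 := mulRangeEquiv_apply hm hn (Multiplicative.ofAdd (1:ℤ)) ⟨_, rfl⟩
        rw [show ((mulRangeEquiv hm hn ⟨(Multiplicative.ofAdd (1:ℤ)) ^ m, ⟨_, rfl⟩⟩ :
          mulRange n) : Multiplicative ℤ) = _ from h2] at this
        simpa [map_zpow] using this)
  let F' : HNNExtension (Multiplicative ℤ) (mulRange m) (mulRange n)
        (mulRangeEquiv hm hn) →* BS m n :=
    HNNExtension.lift (zpowersHom _ (BS.a m n)) (BS.t m n) (by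
      rintro ⟨_, ⟨z, rfl⟩⟩
      have := mulRangeEquiv_apply hm hn z ⟨z, rfl⟩
      erw [this]
      simp only [zpowersHom_apply, zpowGroupHom_apply, toAdd_zpow]
      have h2 := (show SemiconjBy _ _ _ from hrel).zpow_right z.toAdd
      simp only [← zpow_mul] at h2
      simpa [mul_comm] using h2.eq)
  have Fa : F (BS.a m n) = HNNExtension.of (Multiplicative.ofAdd 1) :=
    PresentedGroup.toGroup.of _
  have Ft : F (BS.t m n) = HNNExtension.t :=
    PresentedGroup.toGroup.of _
  have F'a : ∀ k : ℤ, F' (HNNExtension.of (Multiplicative.ofAdd k)) = BS.a m n ^ k := by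
    intro k
    simp [F']
  have F't : F' HNNExtension.t = BS.t m n := by simp [F']
  refine ⟨F, F', ?_, ?_, F'a⟩
  · have : F'.comp F = MonoidHom.id _ := by
      apply PresentedGroup.ext
      rintro (_ | _)
      · change F' (F (BS.a m n)) = BS.a m n
        rw [Fa, F'a, zpow_one]
      · change F' (F (BS.t m n)) = BS.t m n
        rw [Ft, F't]
    intro x
    exact DFunLike.congr_fun this x
  · intro k
    rw [map_zpow, Fa, ofpow]

theorem not_dvd_small {m i : ℤ} (hm : 3 ≤ |m|) (hi : i ≠ 0) (hi2 : |i| ≤ 2) : ¬ m ∣ i := by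
  intro h
  have := Int.le_of_dvd (abs_pos.2 hi) ((abs_dvd_abs m i).2 h)
  omega

theorem free_subgroup_in_subgroup_generated_by_a_and_g (m n : ℤ) (hm : 3 ≤ |m|) (hn : 3 ≤ |n|)
    (g : BS m n) (hg : g ∉ Subgroup.zpowers (BS.a m n)) :
    ∃ x y : BS m n, x ∈ Subgroup.closure {BS.a m n, g} ∧ y ∈ Subgroup.closure {BS.a m n, g} ∧
      FreelyGenerateF2 x y := by
  have hm0 : m ≠ 0 := by rintro rfl; simp at hm
  have hn0 : n ≠ 0 := by rintro rfl; simp at hn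
  obtain ⟨F, F', hFF, hFa, hF'a⟩ := bs_hnn m n hm0 hn0
  obtain ⟨d⟩ := (inferInstance :
    Nonempty (HNNExtension.NormalWord.TransversalPair (Multiplicative ℤ) (mulRange m) (mulRange n)))
  let w : HNNExtension.NormalWord d := F g • HNNExtension.NormalWord.empty
  have hw : w.prod (mulRangeEquiv hm0 hn0) = F g := by simp [w]
  -- small powers of `a` move half-trees off themselves
  have key : ∀ (u : ℤˣ) (i : ℤ), i ≠ 0 → |i| ≤ 2 → ∀ v : HNNExtension.NormalWord d,
      HNNExtension.NormalWord.Cancels u v →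
      ¬ HNNExtension.NormalWord.Cancels u (F (BS.a m n) ^ i • v) := by
    rintro u i hi hi2 v ⟨c1, -⟩ ⟨c2, -⟩
    rw [← map_zpow, hFa, HNNExtension.NormalWord.of_smul_eq_smul,
      HNNExtension.NormalWord.group_smul_head, Subgroup.mul_mem_cancel_right _ c1] at c2
    rcases Int.units_eq_one_or u with rfl | rfl
    · exact not_dvd_small hm hi hi2 (mem_mulRange.1 c2)
    · exact not_dvd_small hn hi hi2 (mem_mulRange.1 c2)
  rcases normalWord_decomp (mulRangeEquiv hm0 hn0) w with ⟨-, hp⟩ | ⟨e, f, l, g₀, hp, -, hv⟩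
  · exfalso
    apply hg
    rw [hw] at hp
    refine ⟨w.head.toAdd, ?_⟩
    have := hF'a w.head.toAdd
    rw [ofAdd_toAdd, ← hp, hFF] at this
    exact this.symm
  · rw [hw] at hp
    set a := BS.a m n with ha
    set γ : BS m n := (a ^ w.head.toAdd)⁻¹ * g * (a ^ l.toAdd)⁻¹ with hγ
    have hFγ : F γ = g₀ := by
      rw [hγ, map_mul, map_mul, map_inv, map_inv, hFa, hFa, hp, ofAdd_toAdd, ofAdd_toAdd]
      group
    have ma : a ∈ Subgroup.closure {a, g} := Subgroup.subset_closure (by simp)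
    have mg : g ∈ Subgroup.closure {a, g} := Subgroup.subset_closure (by simp)
    have mγ : γ ∈ Subgroup.closure {a, g} :=
      mul_mem (mul_mem (inv_mem (zpow_mem ma _)) mg) (inv_mem (zpow_mem ma _))
    have mh : γ * a * γ⁻¹ ∈ Subgroup.closure {a, g} := mul_mem (mul_mem mγ ma) (inv_mem mγ)
    set h := γ * a * γ⁻¹ with hh
    refine ⟨a * h * a, h * a * h * a⁻¹ * h, mul_mem (mul_mem ma mh) ma,
      mul_mem (mul_mem (mul_mem (mul_mem mh ma) mh) (inv_mem ma)) mh, ?_⟩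
    have hv' : ∀ v : HNNExtension.NormalWord d, ¬ HNNExtension.NormalWord.Cancels (-e) v →
        HNNExtension.NormalWord.Cancels f (g₀⁻¹ • v) := by
      intro v hc
      by_contra hcon
      have := hv _ hcon
      rw [smul_inv_smul] at this
      exact hc this
    have main := pingpong_aux ⟨w⟩ {v : HNNExtension.NormalWord d |
        HNNExtension.NormalWord.Cancels (-e) v} (F a) (F h)
      (fun i hi hi2 v hvU => key (-e) i hi hi2 v hvU)
      (fun i hi hi2 v hvU => by
        have : F h ^ i = g₀ * F a ^ i * g₀⁻¹ := by
          rw [hh, map_mul, map_mul, map_inv, hFγ, conj_zpow]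
        rw [this, mul_smul, mul_smul]
        exact hv _ (key f i hi hi2 _ (hv' v hvU)))
    have hcomp : FreeGroup.lift (fun b : Bool => if b then F a * F h * F a
        else F h * F a * F h * (F a)⁻¹ * F h) =
        F.comp (FreeGroup.lift (fun b : Bool => if b then a * h * a else h * a * h * a⁻¹ * h)) := by
      ext b
      cases b <;> simp
    rw [hcomp] at main
    exact Function.Injective.of_comp (f := F) main
end

section
/- Let m and n be integers with |m| ≥ 3 and |n| ≥ 3, and let G = BS(m,n) * F₂ be the free product of BS(m,n) with the free group F₂ on two generators. Then the cyclic subgroup of G generated by the image of a (under the canonical inclusion of BS(m,n)) is a maximal amenable subgroup of G. -/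
/-- A left-invariant mean on the bounded real-valued functions on `G` exists:
`G` is amenable. -/
def IsAmenable (G : Type*) [Group G] : Prop :=
  ∃ m : (G → ℝ) → ℝ,
    (∀ f₁ f₂ : G → ℝ, Bornology.IsBounded (Set.range f₁) → Bornology.IsBounded (Set.range f₂) →
      m (f₁ + f₂) = m f₁ + m f₂) ∧
    (∀ (c : ℝ) (f : G → ℝ), Bornology.IsBounded (Set.range f) → m (c • f) = c * m f) ∧
    (∀ f : G → ℝ, Bornology.IsBounded (Set.range f) → (∀ x, 0 ≤ f x) → 0 ≤ m f) ∧
    m (fun _ => 1) = 1 ∧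
    (∀ (g : G) (f : G → ℝ), Bornology.IsBounded (Set.range f) →
      m (fun x => f (g * x)) = m f)

/-- `H` is a maximal amenable subgroup of `G`. -/
def MaximalAmenable {G : Type*} [Group G] (H : Subgroup G) : Prop :=
  IsAmenable H ∧ ∀ K : Subgroup G, IsAmenable K → H ≤ K → K = H
namespace BSAmen

open Filter Topology

/-! ### Cyclic groups are amenable -/

section Cyclic

variable {H : Type*} [Group H]

noncomputable def avg (x : H) (f : H → ℝ) (N : ℕ) : ℝ :=
  (∑ i ∈ Finset.range (N + 1), f (x ^ i)) / (N + 1)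

noncomputable def cmean (x : H) (f : H → ℝ) : ℝ :=
  limUnder (hyperfilter ℕ : Filter ℕ) (avg x f)

lemma exists_bound {f : H → ℝ} (hf : Bornology.IsBounded (Set.range f)) :
    ∃ B : ℝ, ∀ x, |f x| ≤ B := by
  obtain ⟨B, hB⟩ := hf.exists_norm_le
  exact ⟨B, fun x => hB (f x) ⟨x, rfl⟩⟩

lemma tendsto_cmean (x : H) {f : H → ℝ} (hf : Bornology.IsBounded (Set.range f)) :
    Tendsto (avg x f) (hyperfilter ℕ : Filter ℕ) (𝓝 (cmean x f)) := by
  obtain ⟨B, hB⟩ := exists_bound hf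
  have hmem : ∀ N, avg x f N ∈ Set.Icc (-B) B := by
    intro N
    rw [Set.mem_Icc, ← abs_le, avg, abs_div, abs_of_nonneg (by positivity : (0:ℝ) ≤ (N:ℝ) + 1),
      div_le_iff₀ (by positivity)]
    refine (Finset.abs_sum_le_sum_abs _ _).trans ?_
    refine (Finset.sum_le_sum (fun i _ => hB _)).trans ?_
    simp [mul_comm]
  have hc : IsCompact (Set.Icc (-B) B) := isCompact_Icc
  obtain ⟨l, -, hl⟩ := hc.ultrafilter_le_nhds ((hyperfilter ℕ).map (avg x f)) (by
    rw [Filter.le_principal_iff]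
    exact Filter.mem_map.2 (Filter.univ_mem' hmem))
  exact tendsto_nhds_limUnder ⟨l, hl⟩

lemma cmean_shift (x : H) {f : H → ℝ} (hf : Bornology.IsBounded (Set.range f)) :
    cmean x (fun y => f (x * y)) = cmean x f := by
  have hf' : Bornology.IsBounded (Set.range (fun y => f (x * y))) :=
    hf.subset (by rintro _ ⟨y, rfl⟩; exact ⟨x * y, rfl⟩)
  have h1 := (tendsto_cmean x hf').sub (tendsto_cmean x hf)
  obtain ⟨B, hB⟩ := exists_bound hf
  have h2 : Tendsto (fun N => avg x (fun y => f (x * y)) N - avg x f N) atTop (𝓝 0) := by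
    have key : ∀ N : ℕ, ‖avg x (fun y => f (x * y)) N - avg x f N‖ ≤ (2 * B) * (1 / ((N:ℝ) + 1)) := by
      intro N
      have : avg x (fun y => f (x * y)) N - avg x f N = (f (x ^ (N + 1)) - f 1) / ((N:ℝ) + 1) := by
        rw [avg, avg, ← sub_div, ← Finset.sum_sub_distrib]
        congr 1
        have := Finset.sum_range_sub (fun i => f (x ^ i)) (N + 1)
        simpa [pow_succ'] using this
      rw [this, Real.norm_eq_abs, abs_div, abs_of_nonneg (by positivity : (0:ℝ) ≤ (N:ℝ) + 1),
        div_eq_mul_one_div]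
      gcongr
      have a1 := abs_le.1 (hB (x ^ (N + 1)))
      have a2 := abs_le.1 (hB 1)
      rw [abs_le]
      constructor <;> linarith
    refine squeeze_zero_norm key ?_
    simpa using tendsto_one_div_add_atTop_nhds_zero_nat.const_mul (2 * B)
  have h3 := h2.mono_left (Nat.hyperfilter_le_atTop)
  have := tendsto_nhds_unique h1 h3
  linarith

lemma isBounded_shift {f : H → ℝ} (hf : Bornology.IsBounded (Set.range f)) (x : H) :
    Bornology.IsBounded (Set.range (fun y => f (x * y))) :=
  hf.subset (by rintro _ ⟨y, rfl⟩; exact ⟨x * y, rfl⟩)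

lemma cyclic_amenable (x : H) (hx : ∀ y, y ∈ Subgroup.zpowers x) : IsAmenable H := by
  refine ⟨cmean x, ?_, ?_, ?_, ?_, ?_⟩
  · intro f g hf hg
    have h := (tendsto_cmean x hf).add (tendsto_cmean x hg)
    refine Tendsto.limUnder_eq (h.congr fun N => ?_)
    simp [avg, Finset.sum_add_distrib, add_div]
  · intro c f hf
    have h := (tendsto_cmean x hf).const_mul c
    refine Tendsto.limUnder_eq (h.congr fun N => ?_)
    simp only [avg, Pi.smul_apply, smul_eq_mul]
    rw [← Finset.mul_sum, mul_div_assoc]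
  · intro f hf h0
    refine ge_of_tendsto' (tendsto_cmean x hf) fun N => ?_
    exact div_nonneg (Finset.sum_nonneg fun i _ => h0 _) (by positivity)
  · refine Tendsto.limUnder_eq (tendsto_const_nhds.congr fun N => ?_)
    have : (N:ℝ) + 1 ≠ 0 := by positivity
    simp [avg, this]
  · intro g
    obtain ⟨k, rfl⟩ := hx g
    induction k using Int.induction_on with
    | zero => intro f hf; simp
    | succ k ih =>
      intro f hf
      have h1 := ih (fun y => f (x * y)) (isBounded_shift hf x)
      rw [cmean_shift x hf] at h1
      rw [← h1]
      congr 1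
      funext y
      simp only [← mul_assoc]
      rw [add_comm (k:ℤ) 1, zpow_add, zpow_one]
    | pred k ih =>
      intro f hf
      have h1 := cmean_shift x (isBounded_shift hf (x ^ (-(k:ℤ) - 1)))
      rw [← h1, ← ih f hf]
      congr 1
      funext y
      simp only [← mul_assoc]
      rw [sub_eq_add_neg, zpow_add]
      simp

end Cyclic

/-! ### A criterion for non-amenability -/

lemma not_amenable_of_cones {K S : Type*} [Group K] [MulAction K S] [Nonempty S]
    (a g : K) (C D : Set S)
    (hC : ∀ w ∈ C, a • w ∉ C ∧ a • a • w ∉ C)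
    (hD : ∀ w ∈ D, a • w ∉ D ∧ a • a • w ∉ D)
    (hCD : ∀ w, w ∈ C ∨ g • w ∈ D) : ¬ IsAmenable K := by
  classical
  rintro ⟨μ, hadd, -, hpos, hone, hinv⟩
  obtain ⟨s⟩ := ‹Nonempty S›
  let F : Set S → K → ℝ := fun A x => if x • s ∈ A then 1 else 0
  have hF0 : ∀ A x, 0 ≤ F A x := fun A x => by dsimp [F]; split_ifs <;> norm_num
  have bdd : ∀ (f : K → ℝ) (B : ℝ), (∀ x, |f x| ≤ B) → Bornology.IsBounded (Set.range f) := by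
    intro f B h
    refine isBounded_iff_forall_norm_le.2 ⟨B, ?_⟩
    rintro _ ⟨x, rfl⟩
    exact h x
  have hF1 : ∀ A x, F A x ≤ 1 := fun A x => by dsimp [F]; split_ifs <;> norm_num
  have hFb : ∀ A, Bornology.IsBounded (Set.range (F A)) := fun A => bdd _ 1 fun x => by
    rw [abs_of_nonneg (hF0 A x)]; exact hF1 A x
  have mono : ∀ f g : K → ℝ, Bornology.IsBounded (Set.range f) → Bornology.IsBounded (Set.range g) →
      (∀ x, f x ≤ g x) → μ f ≤ μ g := by
    intro f g hf hg h
    obtain ⟨B, hB⟩ := exists_bound hf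
    obtain ⟨B', hB'⟩ := exists_bound hg
    have hb : Bornology.IsBounded (Set.range (g - f)) := bdd _ (B' + B) fun x =>
      (abs_sub _ _).trans (add_le_add (hB' x) (hB x))
    have := hpos (g - f) hb (fun x => sub_nonneg.2 (h x))
    have h2 := hadd f (g - f) hf hb
    rw [add_sub_cancel] at h2
    linarith
  have badd : ∀ f g : K → ℝ, Bornology.IsBounded (Set.range f) → Bornology.IsBounded (Set.range g) →
      Bornology.IsBounded (Set.range (f + g)) := by
    intro f g hf hg
    obtain ⟨B, hB⟩ := exists_bound hf
    obtain ⟨B', hB'⟩ := exists_bound hg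
    exact bdd _ (B + B') fun x => (abs_add_le _ _).trans (add_le_add (hB x) (hB' x))
  have bone : Bornology.IsBounded (Set.range (fun _ : K => (1:ℝ))) := bdd _ 1 (by simp)
  have third : ∀ A : Set S, (∀ w ∈ A, a • w ∉ A ∧ a • a • w ∉ A) → μ (F A) ≤ 1 / 3 := by
    intro A hA
    have b0 := hFb A
    have b1 := isBounded_shift b0 a
    have b2 := isBounded_shift b0 (a * a)
    have e1 := hinv a _ b0
    have e2 := hinv (a * a) _ b0
    have s1 := hadd _ _ b0 b1
    have s2 := hadd _ _ (badd _ _ b0 b1) b2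
    have := mono _ _ (badd _ _ (badd _ _ b0 b1) b2) bone (fun x => by
      have h1 := hA (x • s)
      have h2 := hA (a • x • s)
      simp only [Pi.add_apply, F, mul_smul]
      by_cases p : x • s ∈ A <;> by_cases q : a • x • s ∈ A <;>
        by_cases r : a • a • x • s ∈ A <;> simp_all)
    linarith
  have b1 := isBounded_shift (hFb D) g
  have h := mono _ _ bone (badd _ _ (hFb C) b1) (fun x => by
    have := hCD (x • s)
    simp only [Pi.add_apply, F, mul_smul]
    by_cases p : x • s ∈ C <;> by_cases q : g • x • s ∈ D <;> simp_all)
  rw [hadd _ _ (hFb C) b1, hinv g _ (hFb D), hone] at h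
  have := third C hC
  have := third D hD
  linarith

/-! ### The ping-pong space -/

/-- Oriented stable letters. -/
abbrev Letter := Option Bool × Bool

/-- The space on which `BS(m,n) * F₂` plays ping-pong. -/
abbrev Space := ℤ × (Letter × ℕ)

def opp (e : Letter) : Letter := (e.1, !e.2)

/-- The index of the edge group of an oriented edge. -/
def idx (m n : ℤ) : Letter → ℤ
  | (none, true) => n
  | (none, false) => m
  | (some _, _) => 0

def sh (k : ℤ) : Equiv.Perm Space := (Equiv.addRight k).prodCongr (Equiv.refl _)

@[simp] lemma sh_apply (k : ℤ) (w : Space) : sh k w = (w.1 + k, w.2) := rfl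

/-- The cone behind the edge `a^i e`. -/
def Cone (m n : ℤ) (e : Letter) (i : ℤ) : Set Space :=
  {w | w.2.1 = e ∧ idx m n e ∣ w.1 - i}

noncomputable def decomp (k : ℤ) (hk : k ≠ 0) (p : Space → Prop)
    (hp : ∀ j w, p (sh (k * j) w) ↔ p w) :
    {x // p x} ≃ ℤ × {y : Space // p y ∧ 0 ≤ y.1 ∧ y.1 < |k|} where
  toFun x := (x.1.1 / k, ⟨(x.1.1 % k, x.1.2), by
    refine ⟨?_, Int.emod_nonneg _ hk, Int.emod_lt_abs _ hk⟩
    have h := hp (x.1.1 / k) (x.1.1 % k, x.1.2)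
    simp only [sh_apply, Int.emod_add_mul_ediv] at h
    exact h.1 x.2⟩)
  invFun y := ⟨sh (k * y.1) y.2.1, (hp _ _).2 y.2.2.1⟩
  left_inv x := by
    ext <;> simp [Int.emod_add_mul_ediv]
  right_inv y := by
    obtain ⟨q, ⟨⟨r, d⟩, h, h0, h1⟩⟩ := y
    simp only at h0 h1
    have : r % k = r := by
      rw [← Int.emod_abs]; exact Int.emod_eq_of_lt h0 h1
    have h2 : r / k = 0 := by
      have := Int.emod_add_mul_ediv r k
      have : k * (r / k) = 0 := by omega
      simpa [hk] using this
    ext <;> simp [Int.add_mul_ediv_left _ _ hk, this, h2]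

lemma decomp_sh (k : ℤ) (hk : k ≠ 0) (p : Space → Prop)
    (hp : ∀ j w, p (sh (k * j) w) ↔ p w) (x : {x // p x}) (hx : p (sh k x.1)) :
    decomp k hk p hp ⟨sh k x.1, hx⟩ =
      ((decomp k hk p hp x).1 + 1, (decomp k hk p hp x).2) := by
  ext <;> simp [decomp, Int.add_ediv_of_dvd_right, hk]

lemma exists_equiv (k l : ℤ) (hkl : k = 0 ↔ l = 0) (p q : Space → Prop)
    (hp : ∀ j w, p (sh (k * j) w) ↔ p w) (hq : ∀ j w, q (sh (l * j) w) ↔ q w)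
    (hp' : ∃ e : Letter, ∀ c, p (0, (e, c))) (hq' : ∃ e : Letter, ∀ c, q (0, (e, c))) :
    ∃ E : {x // p x} ≃ {x // q x}, ∀ (x : {x // p x}) (hx : p (sh k x.1)),
      (E ⟨sh k x.1, hx⟩).1 = sh l (E x).1 := by
  obtain ⟨e, he⟩ := hp'
  obtain ⟨e', he'⟩ := hq'
  by_cases hk : k = 0
  · have hl := hkl.1 hk
    subst hk hl
    have : Infinite {x // p x} := Infinite.of_injective
      (fun c : ℕ => (⟨(0, (e, c)), he c⟩ : {x // p x})) (fun c d h => by simpa using h)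
    have : Infinite {x // q x} := Infinite.of_injective
      (fun c : ℕ => (⟨(0, (e', c)), he' c⟩ : {x // q x})) (fun c d h => by simpa using h)
    obtain ⟨E⟩ := nonempty_equiv_of_countable (α := {x // p x}) (β := {x // q x})
    exact ⟨E, fun x hx => by simp⟩
  · have hl : l ≠ 0 := fun h => hk (hkl.2 h)
    have : Infinite {y : Space // p y ∧ 0 ≤ y.1 ∧ y.1 < |k|} := Infinite.of_injective
      (fun c : ℕ => (⟨(0, (e, c)), he c, le_rfl, abs_pos.2 hk⟩ :
        {y : Space // p y ∧ 0 ≤ y.1 ∧ y.1 < |k|})) (fun c d h => by simpa using h)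
    have : Infinite {y : Space // q y ∧ 0 ≤ y.1 ∧ y.1 < |l|} := Infinite.of_injective
      (fun c : ℕ => (⟨(0, (e', c)), he' c, le_rfl, abs_pos.2 hl⟩ :
        {y : Space // q y ∧ 0 ≤ y.1 ∧ y.1 < |l|})) (fun c d h => by simpa using h)
    obtain ⟨R⟩ := nonempty_equiv_of_countable (α := {y : Space // p y ∧ 0 ≤ y.1 ∧ y.1 < |k|})
      (β := {y : Space // q y ∧ 0 ≤ y.1 ∧ y.1 < |l|})
    refine ⟨((decomp k hk p hp).trans ((Equiv.refl ℤ).prodCongr R)).trans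
      (decomp l hl q hq).symm, fun x hx => ?_⟩
    set z := (((decomp k hk p hp).trans ((Equiv.refl ℤ).prodCongr R)).trans
      (decomp l hl q hq).symm) x with hz
    have hz' : q (sh l z.1) := by simpa using (hq 1 z.1).2 z.2
    suffices h : (((decomp k hk p hp).trans ((Equiv.refl ℤ).prodCongr R)).trans
      (decomp l hl q hq).symm) ⟨sh k x.1, hx⟩ = ⟨sh l z.1, hz'⟩ from congrArg Subtype.val h
    rw [Equiv.trans_apply, Equiv.symm_apply_eq, decomp_sh, Equiv.trans_apply, decomp_sh]
    simp [hz]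

lemma cone_inv (m n : ℤ) (e : Letter) (j : ℤ) (w : Space) :
    sh (idx m n e * j) w ∈ Cone m n e 0 ↔ w ∈ Cone m n e 0 := by
  simp [Cone]

lemma exists_tau (m n : ℤ) (hm : 3 ≤ |m|) (hn : 3 ≤ |n|) (j : Option Bool) :
    ∃ τ : Equiv.Perm Space,
      (∀ w, w ∉ Cone m n (j, false) 0 → τ w ∈ Cone m n (j, true) 0) ∧
      (∀ w, w ∉ Cone m n (j, true) 0 → τ⁻¹ w ∈ Cone m n (j, false) 0) ∧
      τ * sh (idx m n (j, false)) = sh (idx m n (j, true)) * τ := by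
  classical
  have hkl : idx m n (j, false) = 0 ↔ idx m n (j, true) = 0 := by
    have hm0 : m ≠ 0 := by rintro rfl; simp at hm
    have hn0 : n ≠ 0 := by rintro rfl; simp at hn
    cases j <;> simp [idx, hm0, hn0]
  obtain ⟨E, hE⟩ := exists_equiv _ _ hkl (fun w => w ∉ Cone m n (j, false) 0)
    (fun w => w ∈ Cone m n (j, true) 0) (fun i w => not_congr (cone_inv m n _ i w))
    (fun i w => cone_inv m n _ i w) ⟨(j, true), by simp [Cone]⟩ ⟨(j, true), by simp [Cone]⟩
  obtain ⟨E', hE'⟩ := exists_equiv _ _ hkl (fun w => ¬ w ∉ Cone m n (j, false) 0)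
    (fun w => ¬ w ∈ Cone m n (j, true) 0)
    (fun i w => not_congr (not_congr (cone_inv m n _ i w)))
    (fun i w => not_congr (cone_inv m n _ i w)) ⟨(j, false), by simp [Cone]⟩
    ⟨(j, false), by simp [Cone]⟩
  have hT1 : ∀ w (h : w ∉ Cone m n (j, false) 0), E.subtypeCongr E' w = (E ⟨w, h⟩).1 := by
    intro w h
    simp [Equiv.subtypeCongr, Equiv.sumCompl_symm_apply_of_pos, h]
  have hT2 : ∀ w (h : ¬ w ∉ Cone m n (j, false) 0), E.subtypeCongr E' w = (E' ⟨w, h⟩).1 := by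
    intro w h
    simp only [Equiv.subtypeCongr, Equiv.trans_apply]
    rw [Equiv.sumCompl_symm_apply_of_neg (p := fun x => x ∉ Cone m n (j, false) 0) h]
    simp
  refine ⟨E.subtypeCongr E', ?_, ?_, ?_⟩
  · intro w hw
    rw [hT1 w hw]
    exact (E ⟨w, hw⟩).2
  · intro w hw
    by_contra hcon
    apply hw
    have := (E ⟨_, hcon⟩).2
    rw [← hT1 _ hcon] at this
    simpa using this
  · ext1 w
    have hinv : sh (idx m n (j, false)) w ∈ Cone m n (j, false) 0 ↔ w ∈ Cone m n (j, false) 0 := by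
      simpa using cone_inv m n (j, false) 1 w
    rw [Equiv.Perm.mul_apply, Equiv.Perm.mul_apply]
    by_cases h : w ∈ Cone m n (j, false) 0
    · have h1 : ¬ w ∉ Cone m n (j, false) 0 := not_not.2 h
      have h2 : ¬ sh (idx m n (j, false)) w ∉ Cone m n (j, false) 0 := not_not.2 (hinv.2 h)
      rw [hT2 _ h1, hT2 _ h2]
      exact hE' ⟨w, h1⟩ h2
    · have h2 : sh (idx m n (j, false)) w ∉ Cone m n (j, false) 0 := fun h' => h (hinv.1 h')
      rw [hT1 _ h, hT1 _ h2]
      exact hE ⟨w, h⟩ h2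

/-! ### The group -/

abbrev Gp (m n : ℤ) := Monoid.Coprod (BS m n) (FreeGroup Bool)

def ga (m n : ℤ) : Gp m n := Monoid.Coprod.inl (BS.a m n)

def st (m n : ℤ) : Option Bool → Gp m n
  | none => Monoid.Coprod.inl (BS.t m n)
  | some b => Monoid.Coprod.inr (FreeGroup.of b)

def sl (m n : ℤ) : Letter → Gp m n
  | (j, true) => st m n j
  | (j, false) => (st m n j)⁻¹

lemma sl_opp (m n : ℤ) (e : Letter) : sl m n e * sl m n (opp e) = 1 := by
  rcases e with ⟨j, _ | _⟩ <;> simp [sl, opp]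

lemma rel (m n : ℤ) : st m n none * ga m n ^ m = ga m n ^ n * st m n none := by
  have h : (BS.t m n) * (BS.a m n) ^ m * (BS.t m n)⁻¹ * ((BS.a m n) ^ n)⁻¹ = 1 := by
    have := PresentedGroup.one_of_mem (rels := bsRels m n) (Set.mem_singleton _)
    simpa [BS.t, BS.a, PresentedGroup.of] using this
  have h' : (BS.t m n) * (BS.a m n) ^ m = (BS.a m n) ^ n * BS.t m n := by
    rw [mul_inv_eq_one] at h
    rw [← h]; group
  have := congrArg (Monoid.Coprod.inl : BS m n →* Gp m n) h'
  simpa [st, ga] using this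

lemma sl_rel1 (m n : ℤ) (e : Letter) :
    sl m n e * ga m n ^ idx m n (opp e) = ga m n ^ idx m n e * sl m n e := by
  rcases e with ⟨_ | b, _ | _⟩
  · simp only [sl, idx, opp, Bool.not_false]
    rw [eq_mul_inv_iff_mul_eq, mul_assoc, inv_mul_eq_iff_eq_mul, rel]
  · simp only [sl, idx, opp, Bool.not_true]
    exact rel m n
  · simp [idx, opp]
  · simp [idx, opp]

lemma sl_rel (m n : ℤ) (e : Letter) (c : ℤ) :
    sl m n e * ga m n ^ (idx m n (opp e) * c) = ga m n ^ (idx m n e * c) * sl m n e := by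
  have h : SemiconjBy (sl m n e) (ga m n ^ idx m n (opp e)) (ga m n ^ idx m n e) := sl_rel1 m n e
  have := h.zpow_right c
  rw [← zpow_mul, ← zpow_mul] at this
  exact this

/-- Reduced words starting with the letter `e`. -/
inductive Red (m n : ℤ) : Letter → Gp m n → Prop
  | base (e : Letter) (j : ℤ) : Red m n e (sl m n e * ga m n ^ j)
  | step (e d : Letter) (i : ℤ) (g : Gp m n) (h : Red m n d g)
      (hr : ¬ (d = opp e ∧ idx m n d ∣ i)) : Red m n e (sl m n e * ga m n ^ i * g)

def Normal (m n : ℤ) : Set (Gp m n) :=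
  {g | (∃ i : ℤ, g = ga m n ^ i) ∨ ∃ (i : ℤ) (e : Letter) (r : Gp m n), Red m n e r ∧ g = ga m n ^ i * r}

lemma normal_a (m n : ℤ) (k : ℤ) {g : Gp m n} (h : g ∈ Normal m n) :
    ga m n ^ k * g ∈ Normal m n := by
  rcases h with ⟨i, rfl⟩ | ⟨i, e, r, hr, rfl⟩
  · exact Or.inl ⟨k + i, by rw [zpow_add]⟩
  · exact Or.inr ⟨k + i, e, r, hr, by rw [zpow_add, mul_assoc]⟩

lemma normal_s (m n : ℤ) (e : Letter) {g : Gp m n} (h : g ∈ Normal m n) :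
    sl m n e * g ∈ Normal m n := by
  rcases h with ⟨i, rfl⟩ | ⟨i, d, r, hr, rfl⟩
  · exact Or.inr ⟨0, e, _, Red.base e i, by simp⟩
  · by_cases hc : d = opp e ∧ idx m n d ∣ i
    · obtain ⟨rfl, c, rfl⟩ := hc
      rw [← mul_assoc, sl_rel, mul_assoc]
      apply normal_a
      cases hr with
      | base _ j =>
        rw [← mul_assoc, sl_opp, one_mul]
        exact Or.inl ⟨j, rfl⟩
      | step _ d' i' g' h' hr' =>
        rw [← mul_assoc, ← mul_assoc, sl_opp, one_mul]
        exact Or.inr ⟨i', d', g', h', rfl⟩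
    · exact Or.inr ⟨0, e, _, Red.step e d i r hr hc, by simp [mul_assoc]⟩

/-- The left stabilizer of the set of elements in normal form. -/
def stab (m n : ℤ) : Subgroup (Gp m n) where
  carrier := {h | (∀ g ∈ Normal m n, h * g ∈ Normal m n) ∧ ∀ g ∈ Normal m n, h⁻¹ * g ∈ Normal m n}
  one_mem' := by simp
  mul_mem' := by
    rintro x y ⟨hx, hx'⟩ ⟨hy, hy'⟩
    refine ⟨fun g hg => ?_, fun g hg => ?_⟩
    · rw [mul_assoc]; exact hx _ (hy _ hg)
    · rw [mul_inv_rev, mul_assoc]; exact hy' _ (hx' _ hg)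
  inv_mem' := by
    rintro x ⟨hx, hx'⟩
    exact ⟨hx', by simpa using hx⟩

lemma ga_mem_stab (m n : ℤ) : ga m n ∈ stab m n :=
  ⟨fun g hg => by simpa using normal_a m n 1 hg, fun g hg => by simpa using normal_a m n (-1) hg⟩

lemma st_mem_stab (m n : ℤ) (j : Option Bool) : st m n j ∈ stab m n :=
  ⟨fun _ hg => normal_s m n (j, true) hg, fun _ hg => normal_s m n (j, false) hg⟩

lemma stab_eq_top (m n : ℤ) : stab m n = ⊤ := by
  rw [eq_top_iff, ← Monoid.Coprod.range_inl_sup_range_inr, sup_le_iff]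
  constructor
  · rw [MonoidHom.range_eq_map, Subgroup.map_le_iff_le_comap,
      ← PresentedGroup.closure_range_of, Subgroup.closure_le]
    rintro _ ⟨b, rfl⟩
    cases b
    · exact ga_mem_stab m n
    · exact st_mem_stab m n none
  · rw [MonoidHom.range_eq_map, Subgroup.map_le_iff_le_comap,
      ← FreeGroup.closure_range_of, Subgroup.closure_le]
    rintro _ ⟨b, rfl⟩
    exact st_mem_stab m n (some b)

lemma mem_normal (m n : ℤ) (g : Gp m n) : g ∈ Normal m n := by
  have h : g ∈ stab m n := by rw [stab_eq_top]; trivial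
  simpa using h.1 1 (Or.inl ⟨0, by simp⟩)

lemma sh_add (k l : ℤ) : sh (k + l) = sh k * sh l := by
  ext1 w
  simp only [sh_apply, Equiv.Perm.mul_apply, Prod.mk.injEq, and_true]
  ring

lemma sh_zpow (k : ℤ) : sh 1 ^ k = sh k := by
  let φ : Multiplicative ℤ →* Equiv.Perm Space :=
    { toFun := fun k => sh k.toAdd
      map_one' := by ext1 w; simp
      map_mul' := fun k l => sh_add _ _ }
  have := map_zpow φ (Multiplicative.ofAdd 1) k
  simpa [φ, ← ofAdd_zsmul] using this.symm

/-- There is an action of the group playing ping-pong. -/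
lemma exists_action (m n : ℤ) (hm : 3 ≤ |m|) (hn : 3 ≤ |n|) :
    ∃ φ : Gp m n →* Equiv.Perm Space, φ (ga m n) = sh 1 ∧
      ∀ e w, w ∉ Cone m n (opp e) 0 → φ (sl m n e) w ∈ Cone m n e 0 := by
  choose τ h1 h2 h3 using exists_tau m n hm hn
  let f : Bool → Equiv.Perm Space := fun b => if b then τ none else sh 1
  have hf : ∀ r ∈ bsRels m n, FreeGroup.lift f r = 1 := by
    intro r hr
    rw [bsRels, Set.mem_singleton_iff] at hr
    subst hr
    have := h3 none
    simp only [idx] at this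
    simp [f, sh_zpow, this]
  refine ⟨Monoid.Coprod.lift (PresentedGroup.toGroup hf) (FreeGroup.lift fun b => τ (some b)),
    ?_, ?_⟩
  · simp [ga, BS.a, f]
  · have hst : ∀ j, Monoid.Coprod.lift (PresentedGroup.toGroup hf)
        (FreeGroup.lift fun b => τ (some b)) (st m n j) = τ j := by
      intro j
      cases j <;> simp [st, BS.t, f]
    rintro ⟨j, _ | _⟩ w hw
    · simp only [sl, map_inv, hst]
      exact h2 j w hw
    · simp only [sl, hst]
      exact h1 j w hw

lemma red_cones (m n : ℤ) (φ : Gp m n →* Equiv.Perm Space) (ha : φ (ga m n) = sh 1)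
    (hs : ∀ e w, w ∉ Cone m n (opp e) 0 → φ (sl m n e) w ∈ Cone m n e 0)
    {e : Letter} {g : Gp m n} (hg : Red m n e g) :
    ∃ (d : Letter) (j : ℤ), ∀ w, w ∈ Cone m n d j ∨ φ g w ∈ Cone m n e 0 := by
  induction hg with
  | base e j =>
    refine ⟨opp e, -j, fun w => ?_⟩
    by_cases hw : w ∈ Cone m n (opp e) (-j)
    · exact Or.inl hw
    · right
      rw [map_mul, Equiv.Perm.mul_apply, map_zpow, ha, sh_zpow]
      apply hs
      intro h
      apply hw
      simpa [Cone] using h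
  | step e d i g h hr ih =>
    obtain ⟨d', j, H⟩ := ih
    refine ⟨d', j, fun w => (H w).imp_right fun hw => ?_⟩
    rw [map_mul, map_mul, Equiv.Perm.mul_apply, Equiv.Perm.mul_apply, map_zpow, ha, sh_zpow]
    apply hs
    intro h'
    apply hr
    obtain ⟨p1, p2⟩ := hw
    obtain ⟨q1, q2⟩ := h'
    simp only [sh_apply, sub_zero] at p1 p2 q1 q2
    have hd : d = opp e := p1.symm.trans q1
    refine ⟨hd, ?_⟩
    rw [← hd] at q2
    exact (Int.dvd_add_right p2).1 q2

lemma cone_disj (m n : ℤ) (hm : 3 ≤ |m|) (hn : 3 ≤ |n|) (e : Letter) (i : ℤ) (w : Space)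
    (hw : w ∈ Cone m n e i) : sh 1 w ∉ Cone m n e i ∧ sh 1 (sh 1 w) ∉ Cone m n e i := by
  have key : ∀ c : ℤ, 0 < c → c < 3 → ¬ idx m n e ∣ c := by
    intro c h0 h3 h
    have hle : idx m n e = 0 ∨ 3 ≤ |idx m n e| := by
      rcases e with ⟨_ | b, _ | _⟩ <;> simp [idx, hm, hn]
    rcases hle with h' | h'
    · rw [h', zero_dvd_iff] at h; omega
    · have := Int.le_of_dvd h0 ((abs_dvd _ _).2 h)
      omega
  obtain ⟨p1, p2⟩ := hw
  refine ⟨fun h => key 1 (by norm_num) (by norm_num) ?_,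
    fun h => key 2 (by norm_num) (by norm_num) ?_⟩
  · have := Int.dvd_sub h.2 p2
    simp only [sh_apply] at this
    convert this using 1
    ring
  · have := Int.dvd_sub h.2 p2
    simp only [sh_apply] at this
    convert this using 1
    ring

end BSAmen

theorem maximal_amenable_cyclic_in_BS_free_product_F2 (m n : ℤ) (hm : 3 ≤ |m|) (hn : 3 ≤ |n|) :
    MaximalAmenable
      (Subgroup.zpowers
        ((Monoid.Coprod.inl : BS m n →* Monoid.Coprod (BS m n) (FreeGroup Bool))
          (BS.a m n))) := by
  constructor
  · refine BSAmen.cyclic_amenable ⟨_, Subgroup.mem_zpowers _⟩ ?_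
    rintro ⟨y, k, rfl⟩
    exact ⟨k, rfl⟩
  · intro K hK hle
    refine le_antisymm (fun g hg => ?_) hle
    rcases BSAmen.mem_normal m n g with ⟨i, rfl⟩ | ⟨i, e, r, hr, rfl⟩
    · exact ⟨i, rfl⟩
    · exfalso
      obtain ⟨φ, ha, hs⟩ := BSAmen.exists_action m n hm hn
      obtain ⟨d, j, H⟩ := BSAmen.red_cones m n φ ha hs hr
      letI : MulAction K BSAmen.Space := MulAction.compHom _ (φ.comp K.subtype)
      have hsm : ∀ (x : K) (w : BSAmen.Space), x • w = φ x.1 w := fun _ _ => rfl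
      have haK : BSAmen.ga m n ∈ K := hle (Subgroup.mem_zpowers _)
      refine BSAmen.not_amenable_of_cones (⟨_, haK⟩ : K) ⟨_, hg⟩
        (BSAmen.Cone m n d j) (BSAmen.Cone m n e i) ?_ ?_ ?_ hK
      · intro w hw
        simp only [hsm, ha]
        exact BSAmen.cone_disj m n hm hn d j w hw
      · intro w hw
        simp only [hsm, ha]
        exact BSAmen.cone_disj m n hm hn e i w hw
      · intro w
        refine (H w).imp_right fun h => ?_
        simp only [hsm]
        rw [map_mul, Equiv.Perm.mul_apply, map_zpow, ha, BSAmen.sh_zpow]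
        simpa [BSAmen.Cone] using h
end
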